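/- Let f : ℝ^n → [−∞, ∞] be a nearly convex function. If there exists a point x̄ ∈ ri(dom f) with f(x̄) ∈ ℝ, then f is proper, i.e., f(x) > −∞ for all x ∈ ℝ^n. -/

import Mathlib

/-!
Suppose `f x = ⊥` and let `C` be convex with `C ⊆ epi f ⊆ cl C`. The epigraph contains the vertical
line over `x`, so `(0, -1)` is a recession direction of the closed convex set `cl C`, and hence
`cl C` contains the whole vertical line over every point of `dom f`. Given `a ∈ ri (dom f)` and
`p ∈ ri C`, prolong the segment from `p.1` to `a` slightly beyond `a`, to a point `y ∈ dom f`. Every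
`(a, ν)` then lies strictly between `p ∈ ri C` and a point of the vertical line over `y`, which is
contained in `cl C`, so that `(a, ν) ∈ C ⊆ epi f`. Therefore `f a = ⊥`.
-/

open Set Metric

noncomputable section

/-- A set is *nearly convex* if it lies between a convex set and its closure. -/
def NearlyConvex {E : Type*} [NormedAddCommGroup E] [NormedSpace ℝ E] (s : Set E) : Prop :=
  ∃ C : Set E, Convex ℝ C ∧ C ⊆ s ∧ s ⊆ closure C

/-- The *relative interior* of a set: points `a ∈ s` admitting `δ > 0` with
`B(a,δ) ∩ aff s ⊆ s`. -/
def ri {E : Type*} [NormedAddCommGroup E] [NormedSpace ℝ E] (s : Set E) : Set E :=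
  {a | a ∈ s ∧ ∃ δ > 0, Metric.ball a δ ∩ (affineSpan ℝ s : Set E) ⊆ s}

/-- The epigraph of an extended-real-valued function. -/
def epiF {E : Type*} (f : E → EReal) : Set (E × ℝ) := {p | f p.1 ≤ (p.2 : EReal)}

/-- The effective domain of an extended-real-valued function. -/
def domF {E : Type*} (f : E → EReal) : Set E := {x | f x < ⊤}

open AffineMap Filter Topology

section RelativeInterior

variable {E : Type*} [NormedAddCommGroup E] [NormedSpace ℝ E] {s : Set E} {a p q x : E}

theorem mem_ri_iff_mem_nhdsWithin : a ∈ ri s ↔ a ∈ s ∧ s ∈ 𝓝[affineSpan ℝ s] a :=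
  and_congr_right fun _ => Metric.mem_nhdsWithin_iff.symm

theorem ri_eq_intrinsicInterior (s : Set E) : ri s = intrinsicInterior ℝ s := by
  ext a
  rw [mem_ri_iff_mem_nhdsWithin, mem_intrinsicInterior]
  constructor
  · rintro ⟨has, hs⟩
    exact ⟨⟨a, subset_affineSpan ℝ s has⟩,
      mem_interior_iff_mem_nhds.2 (preimage_coe_mem_nhds_subtype.2 hs), rfl⟩
  · rintro ⟨a, ha, rfl⟩
    have hs := preimage_coe_mem_nhds_subtype.1 (mem_interior_iff_mem_nhds.1 ha)
    exact ⟨mem_of_mem_nhdsWithin a.2 hs, hs⟩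

theorem exists_one_lt_lineMap_mem_of_mem_ri (ha : a ∈ ri s) (hx : x ∈ affineSpan ℝ s) :
    ∃ t : ℝ, 1 < t ∧ lineMap x a t ∈ s := by
  obtain ⟨has, hs⟩ := mem_ri_iff_mem_nhdsWithin.1 ha
  have hline : Tendsto (lineMap x a) (𝓝 (1 : ℝ)) (𝓝[affineSpan ℝ s] a) :=
    tendsto_nhdsWithin_iff.2 ⟨lineMap_continuous.tendsto' _ _ (lineMap_apply_one x a),
      Eventually.of_forall fun t => lineMap_mem t hx (subset_affineSpan ℝ s has)⟩
  exact (hline.eventually_mem hs).exists_gt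

theorem openSegment_subset_of_mem_ri_of_mem_intrinsicClosure (hs : Convex ℝ s) (hp : p ∈ ri s)
    (hq : q ∈ intrinsicClosure ℝ s) : openSegment ℝ p q ⊆ s := by
  rintro _ ⟨a, b, ha, hb, hab, rfl⟩
  obtain ⟨hps, hs_nhds⟩ := mem_ri_iff_mem_nhdsWithin.1 hp
  have hq_span : q ∈ affineSpan ℝ s := intrinsicClosure_subset_affineSpan hq
  have : (𝓝[s] q).NeBot :=
    mem_closure_iff_nhdsWithin_neBot.1 (intrinsicClosure_subset_closure hq)
  -- `φ y` is the point for which `a • φ y + b • y = a • p + b • q`.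
  let φ : E → E := fun y => (b / a) • (q - y) + p
  have hφ : Tendsto φ (𝓝[s] q) (𝓝[affineSpan ℝ s] p) := by
    refine tendsto_nhdsWithin_iff.2 ⟨?_, ?_⟩
    · have hφ_cont : Continuous φ := by fun_prop
      exact (hφ_cont.tendsto' q p (by simp [φ])).mono_left nhdsWithin_le_nhds
    · filter_upwards [self_mem_nhdsWithin] with y hy
      exact AffineSubspace.smul_vsub_vadd_mem _ _ hq_span (subset_affineSpan ℝ s hy)
        (subset_affineSpan ℝ s hps)
  obtain ⟨y, hφy, hy⟩ := ((hφ.eventually_mem hs_nhds).and self_mem_nhdsWithin).exists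
  have hcombo : a • φ y + b • y = a • p + b • q := by
    simp only [φ, smul_add, smul_smul, mul_div_cancel₀ b ha.ne']
    module
  exact hcombo ▸ hs hφy hy ha.le hb.le hab

end RelativeInterior

theorem NearlyConvex.convex_closure {E : Type*} [NormedAddCommGroup E] [NormedSpace ℝ E]
    {s : Set E} (hs : NearlyConvex s) : Convex ℝ (closure s) := by
  obtain ⟨C, hC, hCs, hsC⟩ := hs
  rw [(closure_minimal hsC isClosed_closure).antisymm (closure_mono hCs)]
  exact hC.closure

theorem mem_domF_of_mem_epiF {E : Type*} {f : E → EReal} {p : E × ℝ} (hp : p ∈ epiF f) :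
    p.1 ∈ domF f :=
  hp.trans_lt (EReal.coe_lt_top _)

section Epigraph

variable {E : Type*} [NormedAddCommGroup E] [NormedSpace ℝ E] {f : E → EReal} {x : E}

theorem zero_neg_one_mem_asymptoticCone_epiF (hx : f x = ⊥) :
    ((0 : E), (-1 : ℝ)) ∈ asymptoticCone ℝ (epiF f) := by
  have hray : Tendsto (fun t : ℝ => t • ((0 : E), (-1 : ℝ)) +ᵥ (x, (0 : ℝ))) atTop
      (AffineSpace.asymptoticNhds ℝ (E × ℝ) (0, -1)) :=
    (tendsto_id.atTop_smul_const_tendsto_asymptoticNhds _).asymptoticNhds_vadd_const _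
  exact hray.frequently (Frequently.of_forall fun t => by simp [epiF, hx])

theorem mem_closure_epiF_of_eq_bot (hf : NearlyConvex (epiF f)) (hx : f x = ⊥)
    {q : E × ℝ} (hq : q.1 ∈ domF f) : q ∈ closure (epiF f) := by
  obtain ⟨y, ν⟩ := q
  obtain ⟨μ, hμ, -⟩ := EReal.lt_iff_exists_real_btwn.1 hq
  have hmax : (y, max μ ν) ∈ epiF f :=
    hμ.le.trans (EReal.coe_le_coe_iff.2 (le_max_left μ ν))
  have hdown : ((0 : E), (-1 : ℝ)) ∈ asymptoticCone ℝ (closure (epiF f)) :=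
    asymptoticCone_mono subset_closure (zero_neg_one_mem_asymptoticCone_epiF hx)
  simpa using hf.convex_closure.smul_vadd_mem_of_isClosed_of_mem_asymptoticCone isClosed_closure
    (sub_nonneg.2 (le_max_right μ ν)) hdown (subset_closure hmax)

theorem nearlyConvex_proper_general [FiniteDimensional ℝ E] (hf : NearlyConvex (epiF f)) {a : E}
    (ha : a ∈ ri (domF f)) (ha_bot : f a ≠ ⊥) (x : E) : ⊥ < f x := by
  refine bot_lt_iff_ne_bot.2 fun hx => ?_
  obtain ⟨ν, -, hν⟩ := EReal.lt_iff_exists_real_btwn.1 (bot_lt_iff_ne_bot.2 ha_bot)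
  have hvertical : ∀ q : E × ℝ, q.1 ∈ domF f → q ∈ closure (epiF f) := fun _ =>
    mem_closure_epiF_of_eq_bot hf hx
  obtain ⟨C, hC, hCf, hfC⟩ := hf
  have hC_ne : C.Nonempty := closure_nonempty_iff.1 ⟨(x, 0), hfC (by simp [epiF, hx])⟩
  obtain ⟨p, hp⟩ : (ri C).Nonempty := ri_eq_intrinsicInterior C ▸ hC_ne.intrinsicInterior hC
  obtain ⟨t, ht, hy⟩ := exists_one_lt_lineMap_mem_of_mem_ri ha
    (subset_affineSpan ℝ _ (mem_domF_of_mem_epiF (hCf hp.1)))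
  have hq : lineMap p (a, ν) t ∈ intrinsicClosure ℝ C := by
    rw [intrinsicClosure_eq_closure]
    exact closure_minimal hfC isClosed_closure (hvertical _ (by rwa [fst_lineMap]))
  have hmem : (a, ν) ∈ openSegment ℝ p (lineMap p (a, ν) t) := by
    rw [openSegment_eq_image_lineMap]
    exact ⟨t⁻¹, ⟨by positivity, inv_lt_one_of_one_lt₀ ht⟩, by
      rw [lineMap_lineMap_right, inv_mul_cancel₀ (by positivity), lineMap_apply_one]⟩
  exact hν.not_ge (hCf (openSegment_subset_of_mem_ri_of_mem_intrinsicClosure hC hp hq hmem))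

end Epigraph

theorem nearlyConvex_proper (n : ℕ) (f : EuclideanSpace ℝ (Fin n) → EReal)
    (hf : NearlyConvex (epiF f)) (xbar : EuclideanSpace ℝ (Fin n))
    (hxbar : xbar ∈ ri (domF f)) (hreal : ∃ r : ℝ, f xbar = (r : EReal)) :
    ∀ x, ⊥ < f x := by
  obtain ⟨r, hr⟩ := hreal
  exact nearlyConvex_proper_general hf hxbar (hr ▸ EReal.coe_ne_bot r)
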